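/- arXiv:1402.0008 — 2 statements merged into one kernel-verified Lean document; each statement's English description precedes it below -/
import Mathlib

section
/- Modified energy conservation of Scheme-3 (Theorem 2.1, case Scheme-3). Suppose f^n, f^{n+1} are phase-space functions and E^{n−1/2}, E^n, E^{n+1/2}, E^{n+1}, E^{n+3/2}, B^n, B^{n+1} are spatial vector fields satisfying: E^n = E^{n−1/2} + (Δt/2)(∇×B^n − J^n); E^{n+1/2} = E^n + (Δt/2)(∇×B^n − J^n), where J^m(x) = ∫_Ωv f^m(x,v) v dv for m = n, n+1; B^{n+1} = B^n − Δt ∇×E^{n+1/2}; (f^{n+1} − f^n)/Δt + v·∇_x ((f^n + f^{n+1})/2) + (E^{n+1/2} + v×(B^n + B^{n+1})/2)·∇_v ((f^n + f^{n+1})/2) = 0; E^{n+1} = E^{n+1/2} + (Δt/2)(∇×B^{n+1} − J^{n+1}); and E^{n+3/2} = E^{n+1} + (Δt/2)(∇×B^{n+1} − J^{n+1}). Then the modified discrete total energy is conserved: ∫_Ωx ∫_Ωv f^{n+1} |v|² dv dx + ∫_Ωx (|B^{n+1}|² + E^{n+1/2}·E^{n+3/2}) dx = ∫_Ωx ∫_Ωv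 f^n |v|² dv dx + ∫_Ωx (|B^n|² + E^{n−1/2}·E^{n+1/2}) dx. -/
open MeasureTheory Matrix

noncomputable section

/-- Points of `ℝ³`. -/
abbrev V3 : Type := Fin 3 → ℝ

/-- Partial derivative in the `i`-th coordinate direction. -/
def pd (i : Fin 3) (g : V3 → ℝ) (x : V3) : ℝ := fderiv ℝ g x (Pi.single i 1)

/-- Curl of a vector field on `ℝ³`. -/
def curl (U : V3 → V3) (x : V3) : V3 :=
  ![pd 1 (fun y => U y 2) x - pd 2 (fun y => U y 1) x,
    pd 2 (fun y => U y 0) x - pd 0 (fun y => U y 2) x,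
    pd 0 (fun y => U y 1) x - pd 1 (fun y => U y 0) x]

/-- Gradient in the `x`-variable of a phase-space function. -/
def gradX (f : V3 → V3 → ℝ) (x v : V3) : V3 :=
  fun i => fderiv ℝ (fun y => f y v) x (Pi.single i 1)

/-- Gradient in the `v`-variable of a phase-space function. -/
def gradV (f : V3 → V3 → ℝ) (x v : V3) : V3 :=
  fun i => fderiv ℝ (fun w => f x w) v (Pi.single i 1)

/-- The period box `[0,L]³`. -/
def box (L : ℝ) : Set V3 := Set.Icc 0 (fun _ => L)

/-- A spatial vector field: smooth and `L`-periodic. -/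
def IsSpatialVF (L : ℝ) (U : V3 → V3) : Prop :=
  ContDiff ℝ (⊤ : ℕ∞) U ∧ ∀ (x : V3) (i : Fin 3), U (x + L • (Pi.single i (1:ℝ) : V3)) = U x

/-- A phase-space function: smooth, `L`-periodic in `x`, compactly supported in `v`
(uniformly in `x`). -/
def IsPhase (L : ℝ) (f : V3 → V3 → ℝ) : Prop :=
  ContDiff ℝ (⊤ : ℕ∞) (fun p : V3 × V3 => f p.1 p.2) ∧
  (∀ (x v : V3) (i : Fin 3), f (x + L • (Pi.single i (1:ℝ) : V3)) v = f x v) ∧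
  ∃ R : ℝ, ∀ (x v : V3), R ≤ ‖v‖ → f x v = 0

/-- Current density `J(x) = ∫ f(x,v) v dv`. -/
def Jcur (f : V3 → V3 → ℝ) (x : V3) : V3 := ∫ v : V3, f x v • v

/-- Kinetic energy `∫_Ωx ∫_Ωv f |v|² dv dx`. -/
def kinE (L : ℝ) (f : V3 → V3 → ℝ) : ℝ :=
  ∫ x in box L, ∫ v : V3, f x v * (v ⬝ᵥ v)

/-- Field energy `∫_Ωx |U|² dx`. -/
def fieldE (L : ℝ) (U : V3 → V3) : ℝ := ∫ x in box L, U x ⬝ᵥ U x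

theorem pd_mul' (i : Fin 3) {f g : V3 → ℝ} {x : V3} (hf : DifferentiableAt ℝ f x)
    (hg : DifferentiableAt ℝ g x) :
    pd i (fun y => f y * g y) x = f x * pd i g x + pd i f x * g x := by
  unfold pd
  rw [fderiv_fun_mul hf hg]
  simp; ring

theorem pd_add' (i : Fin 3) {f g : V3 → ℝ} {x : V3} (hf : DifferentiableAt ℝ f x)
    (hg : DifferentiableAt ℝ g x) :
    pd i (fun y => f y + g y) x = pd i f x + pd i g x := by
  unfold pd
  rw [fderiv_fun_add hf hg]
  simp

theorem pd_sub' (i : Fin 3) {f g : V3 → ℝ} {x : V3} (hf : DifferentiableAt ℝ f x)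
    (hg : DifferentiableAt ℝ g x) :
    pd i (fun y => f y - g y) x = pd i f x - pd i g x := by
  unfold pd
  rw [fderiv_fun_sub hf hg]
  simp

theorem pd_const' (i : Fin 3) (c : ℝ) (x : V3) : pd i (fun _ => c) x = 0 := by
  simp [pd]

theorem pd_coord (i j : Fin 3) (x : V3) :
    pd i (fun y => y j) x = if j = i then 1 else 0 := by
  unfold pd
  rw [(hasFDerivAt_apply j x).fderiv]
  simp [Pi.single_apply]

theorem continuous_pd (i : Fin 3) {g : V3 → ℝ} (hg : ContDiff ℝ 1 g) : Continuous (pd i g) := by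
  unfold pd
  exact (hg.continuous_fderiv one_ne_zero).clm_apply continuous_const

theorem integral_div_periodic (L : ℝ) (hL : 0 < L) (P : Fin 3 → V3 → ℝ)
    (hP : ∀ i, ContDiff ℝ 1 (P i))
    (hper : ∀ i x, P i (x + L • (Pi.single i (1:ℝ) : V3)) = P i x) :
    ∫ x in box L, ∑ i, pd i (P i) x = 0 := by
  have hle : (0 : V3) ≤ fun _ => L := fun _ => hL.le
  have h := integral_divergence_of_hasFDerivAt_off_countable' (0 : V3) (fun _ => L) hle P
    (fun i x => fderiv ℝ (P i) x) ∅ Set.countable_empty (fun i => (hP i).continuous.continuousOn)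
    (fun x _ i => ((hP i).differentiable one_ne_zero x).hasFDerivAt)
    (by
      apply Continuous.integrableOn_Icc
      exact continuous_finsetSum _ fun i _ => continuous_pd i (hP i))
  unfold box pd
  rw [h]
  apply Finset.sum_eq_zero
  intro i _
  rw [sub_eq_zero]
  congr 1
  ext x
  rw [← hper i (i.insertNth ((0 : V3) i) x)]
  congr 1
  ext j
  rcases Fin.eq_self_or_eq_succAbove i j with h | ⟨k, rfl⟩
  · subst h; simp
  · simp

theorem integral_pd_zero (i : Fin 3) {g : V3 → ℝ} (hg : ContDiff ℝ 1 g)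
    (hs : HasCompactSupport g) : Integrable (pd i g) ∧ ∫ v, pd i g v = 0 := by
  have hI : Integrable (pd i g) := by
    apply (continuous_pd i hg).integrable_of_hasCompactSupport
    exact hs.fderiv_apply ℝ _
  refine ⟨hI, ?_⟩
  have h := integral_mul_fderiv_eq_neg_fderiv_mul_of_integrable (μ := (volume : Measure V3))
    (f := fun _ : V3 => (1:ℝ)) (g := g) (v := Pi.single i 1) (by simp)
    (by simp only [one_mul]; exact hI)
    (by simpa using hg.continuous.integrable_of_hasCompactSupport hs)
    (fun x _ => by fun_prop) (fun x _ => hg.differentiable one_ne_zero x)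
  simpa [pd] using h

theorem integral_v_parts (a b : V3) {g : V3 → ℝ} (hg : ContDiff ℝ 1 g)
    (hs : HasCompactSupport g) :
    Integrable (fun v : V3 => ((a + crossProduct v b) ⬝ᵥ fun i => pd i g v) * (v ⬝ᵥ v)
      + 2 * (a ⬝ᵥ v) * g v) ∧
    ∫ v : V3, (((a + crossProduct v b) ⬝ᵥ fun i => pd i g v) * (v ⬝ᵥ v)
      + 2 * (a ⬝ᵥ v) * g v) = 0 := by
  have hd : Differentiable ℝ g := hg.differentiable one_ne_zero
  have key : ∀ i, Integrable (pd i (fun v => ((a + crossProduct v b) i * (v ⬝ᵥ v)) * g v)) ∧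
      ∫ v, pd i (fun v => ((a + crossProduct v b) i * (v ⬝ᵥ v)) * g v) v = 0 := by
    intro i
    apply integral_pd_zero
    · refine ContDiff.mul ?_ hg
      fin_cases i <;> simp [crossProduct, dotProduct, Fin.sum_univ_three] <;> fun_prop
    · exact hs.mul_left
  have e : (fun v : V3 => ((a + crossProduct v b) ⬝ᵥ fun i => pd i g v) * (v ⬝ᵥ v)
      + 2 * (a ⬝ᵥ v) * g v) = fun v => ∑ i, pd i (fun v => ((a + crossProduct v b) i * (v ⬝ᵥ v)) * g v) v := by
    ext v
    have h1 : ∀ i (c : V3 → ℝ), Differentiable ℝ c → pd i (fun v => c v * g v) v = c v * pd i g v + pd i c v * g v :=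
      fun i c hc => pd_mul' i (hc v) (hd v)
    rw [Fin.sum_univ_three]
    simp only [crossProduct, dotProduct, Fin.sum_univ_three, LinearMap.mk₂_apply, Pi.add_apply, Matrix.cons_val]
    rw [h1 0 _ (by fun_prop), h1 1 _ (by fun_prop), h1 2 _ (by fun_prop)]
    have q0 : pd 0 (fun v : V3 => (a 0 + (v 1 * b 2 - v 2 * b 1)) * (v 0 * v 0 + v 1 * v 1 + v 2 * v 2)) v
        = (a 0 + (v 1 * b 2 - v 2 * b 1)) * (2 * v 0) := by
      simp (discharger := fun_prop) only [pd_mul', pd_add', pd_sub', pd_const', pd_coord]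
      norm_num; ring_nf; try simp
    have q1 : pd 1 (fun v : V3 => (a 1 + (v 2 * b 0 - v 0 * b 2)) * (v 0 * v 0 + v 1 * v 1 + v 2 * v 2)) v
        = (a 1 + (v 2 * b 0 - v 0 * b 2)) * (2 * v 1) := by
      simp (discharger := fun_prop) only [pd_mul', pd_add', pd_sub', pd_const', pd_coord]
      norm_num; ring_nf; try simp
    have q2 : pd 2 (fun v : V3 => (a 2 + (v 0 * b 1 - v 1 * b 0)) * (v 0 * v 0 + v 1 * v 1 + v 2 * v 2)) v
        = (a 2 + (v 0 * b 1 - v 1 * b 0)) * (2 * v 2) := by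
      simp (discharger := fun_prop) only [pd_mul', pd_add', pd_sub', pd_const', pd_coord]
      norm_num; ring_nf; try simp
    rw [q0, q1, q2]
    ring
  rw [e]
  refine ⟨integrable_finsetSum _ fun i _ => (key i).1, ?_⟩
  rw [integral_finsetSum _ fun i _ => (key i).1]
  exact Finset.sum_eq_zero fun i _ => (key i).2

theorem integral_curl_zero (L : ℝ) (hL : 0 < L) {E B : V3 → V3} (hE : IsSpatialVF L E)
    (hB : IsSpatialVF L B) :
    ∫ x in box L, (curl E x ⬝ᵥ B x - E x ⬝ᵥ curl B x) = 0 := by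
  have cE : ∀ i, ContDiff ℝ 1 fun y => E y i := fun i =>
    contDiff_pi.1 (hE.1.of_le (by exact_mod_cast le_top)) i
  have cB : ∀ i, ContDiff ℝ 1 fun y => B y i := fun i =>
    contDiff_pi.1 (hB.1.of_le (by exact_mod_cast le_top)) i
  have dE : ∀ i, Differentiable ℝ fun y => E y i := fun i => (cE i).differentiable one_ne_zero
  have dB : ∀ i, Differentiable ℝ fun y => B y i := fun i => (cB i).differentiable one_ne_zero
  have h := integral_div_periodic L hL (fun i x => crossProduct (E x) (B x) i)
    (by
      have h0 := cE 0; have h1 := cE 1; have h2 := cE 2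
      have k0 := cB 0; have k1 := cB 1; have k2 := cB 2
      intro i
      fin_cases i <;> simp [crossProduct] <;> fun_prop)
    (by intro i x; simp only [hE.2, hB.2])
  rw [← h]
  congr 1
  ext x
  have h0 := dE 0 x; have h1 := dE 1 x; have h2 := dE 2 x
  have k0 := dB 0 x; have k1 := dB 1 x; have k2 := dB 2 x
  rw [Fin.sum_univ_three]
  simp only [crossProduct, dotProduct, Fin.sum_univ_three, LinearMap.mk₂_apply, Matrix.cons_val, curl]
  rw [pd_sub' 0 (h1.fun_mul k2) (h2.fun_mul k1), pd_sub' 1 (h2.fun_mul k0) (h0.fun_mul k2),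
    pd_sub' 2 (h0.fun_mul k1) (h1.fun_mul k0), pd_mul' 0 h1 k2, pd_mul' 0 h2 k1, pd_mul' 1 h2 k0,
    pd_mul' 1 h0 k2, pd_mul' 2 h0 k1, pd_mul' 2 h1 k0]
  ring

theorem integrable_phase (L : ℝ) {F : V3 → V3 → ℝ} (hc : Continuous (Function.uncurry F))
    (hR : ∃ R : ℝ, ∀ (x v : V3), R ≤ ‖v‖ → F x v = 0) :
    Integrable (Function.uncurry F) ((volume.restrict (box L)).prod volume) := by
  obtain ⟨R, hR⟩ := hR
  have hK : IsCompact (box L ×ˢ Metric.closedBall (0 : V3) R) :=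
    IsCompact.prod isCompact_Icc (isCompact_closedBall _ _)
  have h1 : IntegrableOn (Function.uncurry F) (box L ×ˢ Metric.closedBall (0 : V3) R)
      (volume.prod volume) := hc.continuousOn.integrableOn_compact hK
  unfold IntegrableOn at h1
  rw [← Measure.prod_restrict] at h1
  have h2 : ((volume : Measure V3).restrict (box L)).prod
      ((volume : Measure V3).restrict (Metric.closedBall (0 : V3) R))
      = (((volume : Measure V3).restrict (box L)).prod volume).restrict
        (Set.univ ×ˢ Metric.closedBall (0 : V3) R) := by
    rw [← Measure.prod_restrict, Measure.restrict_univ]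
  rw [h2] at h1
  refine (integrableOn_iff_integrable_of_support_subset ?_).1 h1
  rintro ⟨x, v⟩ hxv
  simp only [Set.mem_prod, Set.mem_univ, true_and, Metric.mem_closedBall, dist_zero_right]
  by_contra hlt
  exact hxv (hR x v (not_le.1 hlt).le)

theorem hasCompactSupport_of_bound {g : V3 → ℝ} (hR : ∃ R : ℝ, ∀ v : V3, R ≤ ‖v‖ → g v = 0) :
    HasCompactSupport g := by
  obtain ⟨R, hR⟩ := hR
  apply HasCompactSupport.of_support_subset_isCompact (isCompact_closedBall (0 : V3) R)
  intro v hv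
  simp only [Metric.mem_closedBall, dist_zero_right]
  by_contra hlt
  exact hv (hR v (not_le.1 hlt).le)

/-- The transport term, weighted by `|v|²`. -/
def transp (g : V3 → V3 → ℝ) (x v : V3) : ℝ := (v ⬝ᵥ gradX g x v) * (v ⬝ᵥ v)

theorem transp_facts (L : ℝ) (hL : 0 < L) {g : V3 → V3 → ℝ} (hg : IsPhase L g) :
    Integrable (Function.uncurry (transp g)) ((volume.restrict (box L)).prod volume) ∧
    (∀ x, Integrable (transp g x)) ∧
    ∫ x in box L, ∫ v, transp g x v = 0 := by
  obtain ⟨hs, hper, R, hR⟩ := hg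
  have hs1 : ContDiff ℝ 1 (fun p : V3 × V3 => g p.1 p.2) := hs.of_le (by exact_mod_cast le_top)
  have e : ∀ x v i, gradX g x v i
      = fderiv ℝ (fun p : V3 × V3 => g p.1 p.2) (x, v) (Pi.single i 1, 0) := by
    intro x v i
    have h1 : HasFDerivAt (fun y : V3 => (y, v)) (ContinuousLinearMap.inl ℝ V3 V3) x :=
      hasFDerivAt_prodMk_left x v
    have h2 := ((hs1.differentiable one_ne_zero (x, v)).hasFDerivAt).comp x h1
    have h3 : HasFDerivAt (fun y => g y v) _ x := h2
    unfold gradX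
    rw [h3.fderiv]
    simp
  have hcG : ∀ i, Continuous fun p : V3 × V3 => gradX g p.1 p.2 i := by
    intro i
    simp only [e]
    exact (hs1.continuous_fderiv one_ne_zero).clm_apply continuous_const
  have hc : Continuous (Function.uncurry (transp g)) := by
    have h0 := hcG 0; have h1 := hcG 1; have h2 := hcG 2
    unfold transp Function.uncurry
    simp only [dotProduct, Fin.sum_univ_three]
    fun_prop
  have hz : ∀ x v, R ≤ ‖v‖ → transp g x v = 0 := by
    intro x v hv
    have : (fun y => g y v) = fun _ => 0 := funext fun y => hR y v hv
    simp [transp, gradX, this, dotProduct]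
  have hI := integrable_phase L hc ⟨R, hz⟩
  refine ⟨hI, ?_, ?_⟩
  · intro x
    exact (hc.comp (by fun_prop : Continuous fun v : V3 => (x, v))).integrable_of_hasCompactSupport
      (hasCompactSupport_of_bound ⟨R, hz x⟩)
  · rw [integral_integral_swap hI]
    have : ∀ v, ∫ x in box L, transp g x v = 0 := by
      intro v
      have hgv : ContDiff ℝ 1 fun y => g y v :=
        hs1.comp (by fun_prop : ContDiff ℝ 1 fun y : V3 => (y, v))
      rw [← integral_div_periodic L hL (fun i y => (v i * (v ⬝ᵥ v)) * g y v)
        (fun i => contDiff_const.mul hgv) (fun i x => by simp only [hper])]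
      congr 1
      ext x
      have : ∀ i, pd i (fun y => (v i * (v ⬝ᵥ v)) * g y v) x = v i * (v ⬝ᵥ v) * gradX g x v i := by
        intro i
        rw [pd_mul' i (by fun_prop) (hgv.differentiable one_ne_zero x), pd_const']
        simp [pd, gradX]
      simp only [this]
      simp only [transp, dotProduct, Fin.sum_univ_three]
      ring
    simp [this]

theorem kin_facts (L : ℝ) {f : V3 → V3 → ℝ} (hf : IsPhase L f) :
    IntegrableOn (fun x => ∫ v : V3, f x v * (v ⬝ᵥ v)) (box L) ∧
    (∀ x, Integrable fun v : V3 => f x v * (v ⬝ᵥ v)) ∧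
    (∀ x i, Integrable fun v : V3 => f x v * v i) ∧
    (∀ x i, Jcur f x i = ∫ v : V3, f x v * v i) := by
  obtain ⟨hs, hper, R, hR⟩ := hf
  have hcf : Continuous fun p : V3 × V3 => f p.1 p.2 := hs.continuous
  have hcx : ∀ x, Continuous (f x) := fun x =>
    hcf.comp (by fun_prop : Continuous fun v : V3 => (x, v))
  have hJ : ∀ x i, Integrable fun v : V3 => f x v * v i := fun x i =>
    ((hcx x).mul (continuous_apply i)).integrable_of_hasCompactSupport
      (hasCompactSupport_of_bound ⟨R, fun v hv => by simp [hR x v hv]⟩)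
  refine ⟨?_, ?_, hJ, ?_⟩
  · have hI := integrable_phase L (F := fun x v => f x v * (v ⬝ᵥ v))
      (by unfold Function.uncurry; simp only [dotProduct, Fin.sum_univ_three]; fun_prop)
      ⟨R, fun x v hv => by simp [hR x v hv]⟩
    exact hI.integral_prod_left
  · intro x
    have := hcx x
    apply Continuous.integrable_of_hasCompactSupport
    · simp only [dotProduct, Fin.sum_univ_three]; fun_prop
    · exact hasCompactSupport_of_bound ⟨R, fun v hv => by simp [hR x v hv]⟩
  · intro x i
    unfold Jcur
    rw [eval_integral (by intro i; simpa using hJ x i)]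
    simp

/-- Modified energy conservation of Scheme-3 (Theorem 2.1, case Scheme-3).
`Em, Eh, Et` stand for `E^{n-1/2}, E^{n+1/2}, E^{n+3/2}`. -/
theorem scheme3_modified_energy_conservation
    (L Δt : ℝ) (hL : 0 < L) (hΔt : 0 < Δt)
    (f0 f1 : V3 → V3 → ℝ) (Em En Eh E1 Et Bn B1 : V3 → V3)
    (hf0 : IsPhase L f0) (hf1 : IsPhase L f1)
    (hEm : IsSpatialVF L Em) (hEn : IsSpatialVF L En) (hEh : IsSpatialVF L Eh)
    (hE1 : IsSpatialVF L E1) (hEt : IsSpatialVF L Et)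
    (hBn : IsSpatialVF L Bn) (hB1 : IsSpatialVF L B1)
    (hEn' : ∀ x : V3, En x = Em x + (Δt / 2) • (curl Bn x - Jcur f0 x))
    (hEh' : ∀ x : V3, Eh x = En x + (Δt / 2) • (curl Bn x - Jcur f0 x))
    (hB1' : ∀ x : V3, B1 x = Bn x - Δt • curl Eh x)
    (hVlasov : ∀ x v : V3,
      (f1 x v - f0 x v) / Δt
        + v ⬝ᵥ gradX (fun y w => (f0 y w + f1 y w) / 2) x v
        + (Eh x + crossProduct v ((2:ℝ)⁻¹ • (Bn x + B1 x)))
            ⬝ᵥ gradV (fun y w => (f0 y w + f1 y w) / 2) x v = 0)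
    (hE1' : ∀ x : V3, E1 x = Eh x + (Δt / 2) • (curl B1 x - Jcur f1 x))
    (hEt' : ∀ x : V3, Et x = E1 x + (Δt / 2) • (curl B1 x - Jcur f1 x)) :
    kinE L f1 + ∫ x in box L, (B1 x ⬝ᵥ B1 x + Eh x ⬝ᵥ Et x)
      = kinE L f0 + ∫ x in box L, (Bn x ⬝ᵥ Bn x + Em x ⬝ᵥ Eh x) := by
  have hgP : IsPhase L (fun y w => (f0 y w + f1 y w) / 2) := by
    obtain ⟨s0, p0, R0, r0⟩ := hf0
    obtain ⟨s1, p1, R1, r1⟩ := hf1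
    refine ⟨(s0.add s1).div_const 2, fun x v i => by simp only [p0, p1], max R0 R1, ?_⟩
    intro x v hv
    simp [r0 x v ((le_max_left _ _).trans hv), r1 x v ((le_max_right _ _).trans hv)]
  set g : V3 → V3 → ℝ := fun y w => (f0 y w + f1 y w) / 2 with hg
  obtain ⟨tI, tx, t0⟩ := transp_facts L hL hgP
  obtain ⟨kI0, kx0, jx0, J0⟩ := kin_facts L hf0
  obtain ⟨kI1, kx1, jx1, J1⟩ := kin_facts L hf1
  -- kinetic balance at each x
  have hK : ∀ x, (∫ v : V3, f1 x v * (v ⬝ᵥ v)) - (∫ v : V3, f0 x v * (v ⬝ᵥ v))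
      = -Δt * (∫ v, transp g x v) + Δt * (Eh x ⬝ᵥ (Jcur f0 x + Jcur f1 x)) := by
    intro x
    have hgx : ContDiff ℝ 1 (g x) :=
      (hgP.1.of_le (by exact_mod_cast le_top) : ContDiff ℝ 1 (fun p : V3 × V3 => g p.1 p.2)).comp
        (by fun_prop : ContDiff ℝ 1 fun v : V3 => (x, v))
    have hgs : HasCompactSupport (g x) := by
      obtain ⟨_, _, R, r⟩ := hgP
      exact hasCompactSupport_of_bound ⟨R, r x⟩
    obtain ⟨vI, v0⟩ := integral_v_parts (Eh x) ((2:ℝ)⁻¹ • (Bn x + B1 x)) hgx hgs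
    have hJJ : Eh x ⬝ᵥ (Jcur f0 x + Jcur f1 x)
        = ∫ v : V3, ∑ i, Eh x i * (f0 x v * v i + f1 x v * v i) := by
      rw [integral_finsetSum _ fun i _ => ((jx0 x i).fun_add (jx1 x i)).const_mul _]
      unfold dotProduct
      refine Finset.sum_congr rfl fun i _ => ?_
      rw [integral_const_mul, integral_add (jx0 x i) (jx1 x i), Pi.add_apply, J0, J1]
    have jI : Integrable fun v : V3 => ∑ i, Eh x i * (f0 x v * v i + f1 x v * v i) :=
      integrable_finsetSum _ fun i _ => ((jx0 x i).fun_add (jx1 x i)).const_mul _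
    have hvz := congrArg (fun r => -Δt * r) v0
    simp only [mul_zero] at hvz
    rw [← integral_sub (kx1 x) (kx0 x), hJJ, ← add_zero (_ + _), ← hvz, ← integral_const_mul,
      ← integral_const_mul, ← integral_const_mul,
      ← integral_add ((tx x).const_mul _) (jI.const_mul _),
      ← integral_add (((tx x).const_mul _).fun_add (jI.const_mul _)) (vI.const_mul _)]
    congr 1
    ext v
    have hV := hVlasov x v
    have hV' : f1 x v - f0 x v = -Δt * (v ⬝ᵥ gradX g x v
        + (Eh x + crossProduct v ((2:ℝ)⁻¹ • (Bn x + B1 x))) ⬝ᵥ gradV g x v) := by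
      field_simp at hV
      linarith
    have hpd : (fun i => pd i (g x) v) = gradV g x v := rfl
    rw [hpd, ← sub_mul, hV']
    have hgv : g x v = (f0 x v + f1 x v) / 2 := rfl
    rw [hgv]
    unfold transp
    generalize gradX g x v = A
    generalize gradV g x v = D
    generalize crossProduct v ((2:ℝ)⁻¹ • (Bn x + B1 x)) = C
    simp only [dotProduct, Fin.sum_univ_three, Pi.add_apply]
    ring
  have hS : IsSpatialVF L (fun x => Bn x + B1 x) :=
    ⟨hBn.1.add hB1.1, fun x i => by simp only [hBn.2, hB1.2]⟩
  have hcurl := integral_curl_zero L hL hEh hS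
  have cadd : ∀ x, curl (fun x => Bn x + B1 x) x = curl Bn x + curl B1 x := by
    intro x
    have dB : ∀ i, DifferentiableAt ℝ (fun y => Bn y i) x := fun i =>
      differentiableAt_pi.1 (hBn.1.differentiable (by simp) x) i
    have dB1 : ∀ i, DifferentiableAt ℝ (fun y => B1 y i) x := fun i =>
      differentiableAt_pi.1 (hB1.1.differentiable (by simp) x) i
    have : ∀ i j, pd i (fun y => Bn y j + B1 y j) x
        = pd i (fun y => Bn y j) x + pd i (fun y => B1 y j) x :=
      fun i j => pd_add' i (dB j) (dB1 j)
    ext k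
    fin_cases k <;> simp [curl, this] <;> ring
  have hpt : ∀ x, (B1 x ⬝ᵥ B1 x + Eh x ⬝ᵥ Et x) - (Bn x ⬝ᵥ Bn x + Em x ⬝ᵥ Eh x)
      = -Δt * (curl Eh x ⬝ᵥ (Bn x + B1 x) - Eh x ⬝ᵥ curl (fun x => Bn x + B1 x) x)
        - Δt * (Eh x ⬝ᵥ (Jcur f0 x + Jcur f1 x)) := by
    intro x
    have a1 : ∀ i, Em x i = Eh x i - Δt * (curl Bn x i - Jcur f0 x i) := by
      intro i; rw [hEh' x, hEn' x]; simp; ring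
    have a2 : ∀ i, Et x i = Eh x i + Δt * (curl B1 x i - Jcur f1 x i) := by
      intro i; rw [hEt' x, hE1' x]; simp; ring
    have a3 : ∀ i, B1 x i = Bn x i - Δt * curl Eh x i := by
      intro i; rw [hB1' x]; simp
    rw [cadd]
    simp only [dotProduct, Fin.sum_univ_three, Pi.add_apply, a1, a2, a3]
    ring
  have hci : ∀ {h : V3 → ℝ}, Continuous h → IntegrableOn h (box L) := fun hh =>
    hh.continuousOn.integrableOn_compact isCompact_Icc
  have cU : ∀ {U : V3 → V3}, IsSpatialVF L U → ∀ i, Continuous fun x => U x i :=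
    fun hU i => (continuous_apply i).comp hU.1.continuous
  have cdot : ∀ {U W : V3 → V3}, IsSpatialVF L U → IsSpatialVF L W →
      Continuous fun x => U x ⬝ᵥ W x := fun hU hW =>
    continuous_finsetSum _ fun i _ => (cU hU i).mul (cU hW i)
  have I1 := hci ((cdot hB1 hB1).fun_add (cdot hEh hEt))
  have I0 := hci ((cdot hBn hBn).fun_add (cdot hEm hEh))
  have ccurl : ∀ {U : V3 → V3}, IsSpatialVF L U → ∀ i, Continuous fun x => curl U x i := by
    intro U hU i
    have c : ∀ i j, Continuous (pd i fun y => U y j) := fun i j =>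
      continuous_pd i (contDiff_pi.1 (hU.1.of_le (by exact_mod_cast le_top)) j)
    fin_cases i <;> simp [curl] <;> exact (c _ _).sub (c _ _)
  have IC : IntegrableOn (fun x => curl Eh x ⬝ᵥ (Bn x + B1 x)
      - Eh x ⬝ᵥ curl (fun x => Bn x + B1 x) x) (box L) := by
    apply hci
    exact (continuous_finsetSum _ fun i _ => (ccurl hEh i).mul (cU hS i)).sub
      (continuous_finsetSum _ fun i _ => (cU hEh i).mul (ccurl hS i))
  have IT : IntegrableOn (fun x => ∫ v, transp g x v) (box L) := tI.integral_prod_left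
  have fin : (∫ x in box L, (((∫ v : V3, f1 x v * (v ⬝ᵥ v)) - (∫ v : V3, f0 x v * (v ⬝ᵥ v)))
      + ((B1 x ⬝ᵥ B1 x + Eh x ⬝ᵥ Et x) - (Bn x ⬝ᵥ Bn x + Em x ⬝ᵥ Eh x))))
      = ∫ x in box L, (-Δt * (∫ v, transp g x v) + -Δt * (curl Eh x ⬝ᵥ (Bn x + B1 x)
        - Eh x ⬝ᵥ curl (fun x => Bn x + B1 x) x)) := by
    congr 1
    ext x
    rw [hK, hpt]
    ring
  rw [integral_add (kI1.fun_sub kI0) (I1.fun_sub I0), integral_sub kI1 kI0, integral_sub I1 I0,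
    integral_add (IT.const_mul _) (IC.const_mul _), integral_const_mul, integral_const_mul,
    hcurl, t0] at fin
  unfold kinE
  linarith
end
end

section
/- Energy conservation of the Strang-split Scheme-5 (Theorem 2.2). Let (f_0, E_0, B_0), (f_1, E_1, B_1), ..., (f_5, E_5, B_5) be states consisting of phase-space functions f_i and spatial vector fields E_i, B_i, related by the following five substeps. Step 1 (Scheme-a with step Δt/2): (f_1 − f_0)/(Δt/2) + v·∇_x ((f_0 + f_1)/2) = 0, E_1 = E_0, B_1 = B_0. Step 2 (Scheme-b with step Δt/2): (f_2 − f_1)/(Δt/2) + ((E_1 + E_2)/2)·∇_v ((f_1 + f_2)/2) = 0, (E_2 − E_1)/(Δt/2) = −(J_1 + J_2)/2 where J_i(x) = ∫_Ωv f_i(x,v) v dv, and B_2 = B_1. Step 3 (Scheme-c with step Δt): (B_3 − B_2)/Δt = −∇×((E_2 + E_3)/2), (E_3 − E_2)/Δt = ∇×((B_2 + B_3)/2), and (f_3 − f_2)/Δt + (1/2)(v×(B_2 + B_3))·∇_v ((f_2 + f_3)/2) = 0. Step 4: same relations as Step 2 with indices (1,2) replaced by (3,4). Step 5: same relations as Step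 1 with indices (0,1) replaced by (4,5). Then the total energy is conserved: ∫_Ωx ∫_Ωv f_5 |v|² dv dx + ∫_Ωx (|E_5|² + |B_5|²) dx = ∫_Ωx ∫_Ωv f_0 |v|² dv dx + ∫_Ωx (|E_0|² + |B_0|²) dx. -/
open MeasureTheory Matrix

noncomputable section

lemma aux_box_integral_pd {L : ℝ} (hL : 0 < L) (i : Fin 3) (g : V3 → ℝ) (hg : ContDiff ℝ 1 g)
    (hper : ∀ x : V3, g (x + L • (Pi.single i (1:ℝ) : V3)) = g x) :
    ∫ x in box L, pd i g x = 0 := by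
  classical
  have hcont : Continuous (pd i g) :=
    (hg.continuous_fderiv (by simp)).clm_apply continuous_const
  have key := integral_divergence_of_hasFDerivAt_off_countable' (n := 2) (E := ℝ)
    (0 : V3) (fun _ => L) (fun _ => hL.le)
    (fun j => if j = i then g else fun _ => 0)
    (fun j => if j = i then fderiv ℝ g else fun _ => 0) ∅ Set.countable_empty
    (by
      intro j
      by_cases h : j = i
      · simp only [h, if_true]; exact hg.continuous.continuousOn
      · simp only [h, if_false]; exact continuousOn_const)
    (by
      intro x _ j
      by_cases h : j = i
      · simp only [h, if_true]; exact (hg.differentiable (by simp) x).hasFDerivAt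
      · simp only [h, if_false]; exact hasFDerivAt_const _ _)
    (by
      have : (fun x : V3 => ∑ j, (if j = i then fderiv ℝ g else fun _ => 0) x (Pi.single j 1))
          = pd i g := by
        funext x
        rw [Finset.sum_eq_single i]
        · simp [pd]
        · intro j _ h; simp [h]
        · simp
      rw [this]
      exact hcont.continuousOn.integrableOn_compact isCompact_Icc)
  have hsum : ∀ x : V3, ∑ j, (if j = i then fderiv ℝ g else fun _ => 0) x (Pi.single j 1)
          = pd i g x := by
    intro x
    rw [Finset.sum_eq_single i]
    · simp [pd]
    · intro j _ h; simp [h]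
    · simp
  simp only [hsum] at key
  unfold box
  rw [key]
  apply Finset.sum_eq_zero
  intro j _
  by_cases h : j = i
  · subst h
    simp only [if_true]
    rw [sub_eq_zero]
    congr 1
    funext y
    refine (congrArg g ?_).trans (hper _)
    funext k
    rcases eq_or_ne k j with rfl | hk
    · simp
    · obtain ⟨m, rfl⟩ := Fin.exists_succAbove_eq hk
      simp
  · simp [h]

lemma aux_integrable_prod {L R : ℝ} (h : V3 × V3 → ℝ) (hc : Continuous h)
    (hR : ∀ x v, R ≤ ‖v‖ → h (x, v) = 0) :
    Integrable h ((volume.restrict (box L)).prod (volume : Measure V3)) := by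
  have e : (volume.restrict (box L)).prod (volume : Measure V3)
      = (volume.prod volume).restrict (box L ×ˢ Set.univ) := by
    rw [← Measure.prod_restrict, Measure.restrict_univ]
  rw [e]
  have h1 : IntegrableOn h (box L ×ˢ Metric.closedBall 0 R) (volume.prod volume) :=
    hc.continuousOn.integrableOn_compact (isCompact_Icc.prod (isCompact_closedBall _ _))
  refine h1.of_forall_sdiff_eq_zero (measurableSet_Icc.prod MeasurableSet.univ) ?_
  rintro ⟨x, v⟩ hx
  apply hR
  simp only [Set.mem_sdiff, Set.mem_prod, Set.mem_univ, and_true, Metric.mem_closedBall,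
    dist_zero_right, not_and, not_le] at hx
  exact (hx.2 hx.1).le

lemma aux_ibp (g φ : V3 → ℝ) (hg : ContDiff ℝ 1 g) (hs : HasCompactSupport g)
    (hφ : ContDiff ℝ 1 φ) (e : V3) :
    Integrable (fun v => φ v * fderiv ℝ g v e) ∧ Integrable (fun v => fderiv ℝ φ v e * g v) ∧
    ∫ v, φ v * fderiv ℝ g v e = - ∫ v, fderiv ℝ φ v e * g v := by
  have cg : Continuous (fun v => fderiv ℝ g v e) :=
    (hg.continuous_fderiv (by simp)).clm_apply continuous_const
  have cφ : Continuous (fun v => fderiv ℝ φ v e) :=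
    (hφ.continuous_fderiv (by simp)).clm_apply continuous_const
  have sg : HasCompactSupport (fun v => fderiv ℝ g v e) :=
    (hs.fderiv ℝ).comp_left (g := fun l : V3 →L[ℝ] ℝ => l e) rfl
  have i1 : Integrable (fun v => φ v * fderiv ℝ g v e) :=
    (hφ.continuous.mul cg).integrable_of_hasCompactSupport sg.mul_left
  have i2 : Integrable (fun v => fderiv ℝ φ v e * g v) :=
    (cφ.mul hg.continuous).integrable_of_hasCompactSupport hs.mul_left
  have i3 : Integrable (fun v => φ v * g v) :=
    (hφ.continuous.mul hg.continuous).integrable_of_hasCompactSupport hs.mul_left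
  refine ⟨i1, i2, ?_⟩
  exact integral_mul_fderiv_eq_neg_fderiv_mul_of_integrable i2 i1 i3
    (fun x _ => hφ.differentiable (by simp) x) (fun x _ => hg.differentiable (by simp) x)

lemma aux_contDiff_sq : ContDiff ℝ 1 (fun v : V3 => v ⬝ᵥ v) := by
  simp only [dotProduct]
  fun_prop

lemma aux_fderiv_sq (v : V3) (i : Fin 3) :
    fderiv ℝ (fun v : V3 => v ⬝ᵥ v) v (Pi.single i 1) = 2 * v i := by
  have h : ∀ j : Fin 3, HasFDerivAt (fun w : V3 => w j) (ContinuousLinearMap.proj (R := ℝ) j) v :=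
    fun j => hasFDerivAt_apply j v
  have := HasFDerivAt.fun_sum (u := Finset.univ) (fun j _ => (h j).fun_mul (h j))
  have e : (fun v : V3 => v ⬝ᵥ v) = fun v => ∑ j, v j * v j := rfl
  rw [e, this.fderiv]
  fin_cases i <;> simp [Fin.sum_univ_three] <;> ring

lemma aux_vtransport (g : V3 → ℝ) (W : V3 → V3) (hg : ContDiff ℝ 1 g) (hs : HasCompactSupport g)
    (hW : ∀ i, ContDiff ℝ 1 (fun v => W v i))
    (hdiv : ∀ i v, fderiv ℝ (fun v => W v i) v (Pi.single i 1) = 0) :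
    ∫ v, (W v ⬝ᵥ fun i => fderiv ℝ g v (Pi.single i 1)) * (v ⬝ᵥ v)
      = -2 * ∫ v, g v * (W v ⬝ᵥ v) := by
  have hφ : ∀ i, ContDiff ℝ 1 (fun v => W v i * (v ⬝ᵥ v)) := fun i => (hW i).mul aux_contDiff_sq
  have hd : ∀ i v, fderiv ℝ (fun v => W v i * (v ⬝ᵥ v)) v (Pi.single i 1) = W v i * (2 * v i) := by
    intro i v
    rw [fderiv_fun_mul ((hW i).differentiable (by simp) v)
      (aux_contDiff_sq.differentiable (by simp) v)]
    simp [aux_fderiv_sq, hdiv]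
  have key := fun i => aux_ibp g _ hg hs (hφ i) (Pi.single i 1)
  have e1 : ∀ v, (W v ⬝ᵥ fun i => fderiv ℝ g v (Pi.single i 1)) * (v ⬝ᵥ v)
      = ∑ i, (W v i * (v ⬝ᵥ v)) * fderiv ℝ g v (Pi.single i 1) := by
    intro v
    rw [dotProduct, Finset.sum_mul]
    exact Finset.sum_congr rfl fun i _ => by ring
  have e2 : ∀ v, g v * (W v ⬝ᵥ v) = 2⁻¹ *
      ∑ i, fderiv ℝ (fun v => W v i * (v ⬝ᵥ v)) v (Pi.single i 1) * g v := by
    intro v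
    simp only [hd]
    rw [dotProduct, Finset.mul_sum, Finset.mul_sum]
    exact Finset.sum_congr rfl fun i _ => by ring
  simp only [e1, e2]
  rw [integral_const_mul, integral_finsetSum _ (fun i _ => (key i).1),
    integral_finsetSum _ (fun i _ => (key i).2.1)]
  simp only [fun i => (key i).2.2, Finset.sum_neg_distrib]
  ring

lemma IsPhase.avg {L : ℝ} {f g : V3 → V3 → ℝ} (hf : IsPhase L f) (hg : IsPhase L g) :
    IsPhase L (fun y w => (f y w + g y w) / 2) := by
  obtain ⟨a, b, R, c⟩ := hf
  obtain ⟨a', b', R', c'⟩ := hg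
  refine ⟨(a.add a').div_const 2, fun x v i => by simp only [b, b'], max R R', fun x v h => ?_⟩
  simp [c x v ((le_max_left _ _).trans h), c' x v ((le_max_right _ _).trans h)]

lemma IsPhase.cv {L : ℝ} {f : V3 → V3 → ℝ} (hf : IsPhase L f) (x : V3) :
    ContDiff ℝ 1 (f x) := by
  have := (hf.1.of_le (m := 1) (by simp)).comp
    ((contDiff_const (c := x)).prodMk (contDiff_id (𝕜 := ℝ) (E := V3)))
  exact this

lemma IsPhase.cx {L : ℝ} {f : V3 → V3 → ℝ} (hf : IsPhase L f) (v : V3) :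
    ContDiff ℝ 1 (fun x => f x v) := by
  have := (hf.1.of_le (m := 1) (by simp)).comp
    ((contDiff_id (𝕜 := ℝ) (E := V3)).prodMk (contDiff_const (c := v)))
  exact this

lemma IsPhase.supp {L : ℝ} {f : V3 → V3 → ℝ} (hf : IsPhase L f) (x : V3) :
    HasCompactSupport (f x) := by
  obtain ⟨a, b, R, c⟩ := hf
  refine HasCompactSupport.intro (isCompact_closedBall 0 R) fun v hv => c x v ?_
  simp only [Metric.mem_closedBall, dist_zero_right, not_le] at hv
  exact hv.le

lemma IsPhase.int_mul {L : ℝ} {f : V3 → V3 → ℝ} (hf : IsPhase L f) (x : V3) (φ : V3 → ℝ)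
    (hφ : Continuous φ) : Integrable (fun v => f x v * φ v) :=
  ((hf.cv x).continuous.mul hφ).integrable_of_hasCompactSupport (hf.supp x).mul_right

lemma IsPhase.int_prod {L : ℝ} {f : V3 → V3 → ℝ} (hf : IsPhase L f) :
    Integrable (fun p : V3 × V3 => f p.1 p.2 * (p.2 ⬝ᵥ p.2))
      ((volume.restrict (box L)).prod (volume : Measure V3)) := by
  obtain ⟨a, b, R, c⟩ := hf
  refine aux_integrable_prod (R := R) _
    (a.continuous.mul (aux_contDiff_sq.continuous.comp continuous_snd)) ?_
  intro x v h
  simp [c x v h]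

/-- velocity-space kinetic balance -/
lemma aux_kin {L τ : ℝ} (hτ : τ ≠ 0) {f g : V3 → V3 → ℝ} (hf : IsPhase L f) (hg : IsPhase L g)
    (x : V3) (W : V3 → V3) (hW : ∀ i, ContDiff ℝ 1 (fun v => W v i))
    (hdiv : ∀ i v, fderiv ℝ (fun v => W v i) v (Pi.single i 1) = 0)
    (h : ∀ v, (g x v - f x v) / τ + W v ⬝ᵥ gradV (fun y w => (f y w + g y w) / 2) x v = 0) :
    (∫ v, g x v * (v ⬝ᵥ v)) - ∫ v, f x v * (v ⬝ᵥ v)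
      = τ * ∫ v, (f x v + g x v) * (W v ⬝ᵥ v) := by
  have hF := hf.avg hg
  have key := aux_vtransport _ W (hF.cv x) (hF.supp x) hW hdiv
  rw [← integral_sub (hg.int_mul x _ aux_contDiff_sq.continuous)
    (hf.int_mul x _ aux_contDiff_sq.continuous)]
  have e : ∀ v, g x v * (v ⬝ᵥ v) - f x v * (v ⬝ᵥ v) = -τ * ((W v ⬝ᵥ fun i => fderiv ℝ
      (fun w => (f x w + g x w) / 2) v (Pi.single i 1)) * (v ⬝ᵥ v)) := by
    intro v
    have h1 := h v
    have h2 : W v ⬝ᵥ gradV (fun y w => (f y w + g y w) / 2) x v =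
      W v ⬝ᵥ fun i => fderiv ℝ (fun w => (f x w + g x w) / 2) v (Pi.single i 1) := rfl
    rw [← h2, show W v ⬝ᵥ gradV (fun y w => (f y w + g y w) / 2) x v = -((g x v - f x v) / τ) by
      linarith]
    field_simp
  simp only [e]
  rw [integral_const_mul, key]
  have e3 : ∀ v, (f x v + g x v) / 2 * (W v ⬝ᵥ v) = 2⁻¹ * ((f x v + g x v) * (W v ⬝ᵥ v)) := by
    intro v; ring
  simp only [e3]
  rw [integral_const_mul]
  ring

/-- Scheme a conserves the kinetic energy. -/
lemma aux_stepA {L τ : ℝ} (hL : 0 < L) (hτ : τ ≠ 0) {f g : V3 → V3 → ℝ} (hf : IsPhase L f)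
    (hg : IsPhase L g)
    (h : ∀ x v, (g x v - f x v) / τ + v ⬝ᵥ gradX (fun y w => (f y w + g y w) / 2) x v = 0) :
    kinE L g = kinE L f := by
  have hF := hf.avg hg
  unfold kinE
  rw [integral_integral_swap (f := fun x v => g x v * (v ⬝ᵥ v)) hg.int_prod,
    integral_integral_swap (f := fun x v => f x v * (v ⬝ᵥ v)) hf.int_prod]
  congr 1
  funext v
  have ig : IntegrableOn (fun x => g x v) (box L) :=
    (hg.cx v).continuous.continuousOn.integrableOn_compact isCompact_Icc
  have i_f : IntegrableOn (fun x => f x v) (box L) :=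
    (hf.cx v).continuous.continuousOn.integrableOn_compact isCompact_Icc
  rw [integral_mul_const, integral_mul_const]
  congr 1
  rw [← sub_eq_zero, ← integral_sub ig i_f]
  have e : ∀ x, g x v - f x v = ∑ i, (-τ * v i) *
      pd i (fun y => (f y v + g y v) / 2) x := by
    intro x
    have h1 := h x v
    have h2 : v ⬝ᵥ gradX (fun y w => (f y w + g y w) / 2) x v =
      ∑ i, v i * pd i (fun y => (f y v + g y v) / 2) x := rfl
    have h3 : ∑ i, (-τ * v i) * pd i (fun y => (f y v + g y v) / 2) x =
      -τ * ∑ i, v i * pd i (fun y => (f y v + g y v) / 2) x := by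
      rw [Finset.mul_sum]
      exact Finset.sum_congr rfl fun i _ => by ring
    rw [h3, ← h2, show v ⬝ᵥ gradX (fun y w => (f y w + g y w) / 2) x v
      = -((g x v - f x v) / τ) by linarith]
    field_simp
  simp only [e]
  rw [integral_finsetSum]
  · apply Finset.sum_eq_zero
    intro i _
    rw [integral_const_mul, aux_box_integral_pd hL i _ (hF.cx v) (fun x => hF.2.1 x v i), mul_zero]
  · intro i _
    refine Integrable.const_mul ?_ _
    have : Continuous (pd i (fun y => (f y v + g y v) / 2)) :=
      ((hF.cx v).continuous_fderiv (by simp)).clm_apply continuous_const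
    exact this.continuousOn.integrableOn_compact isCompact_Icc

lemma aux_Jcur {L : ℝ} {f : V3 → V3 → ℝ} (hf : IsPhase L f) (x : V3) (i : Fin 3) :
    Jcur f x i = ∫ v, f x v * v i := by
  unfold Jcur
  have hi : Integrable (fun v : V3 => f x v • v) :=
    ((hf.cv x).continuous.smul continuous_id).integrable_of_hasCompactSupport
      (hf.supp x).smul_right
  have := (ContinuousLinearMap.proj (R := ℝ) (φ := fun _ : Fin 3 => ℝ) i).integral_comp_comm hi
  simpa using this.symm

lemma aux_int_sq {L : ℝ} {E : V3 → V3} (hE : IsSpatialVF L E) :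
    IntegrableOn (fun x => E x ⬝ᵥ E x) (box L) :=
  (aux_contDiff_sq.continuous.comp hE.1.continuous).continuousOn.integrableOn_compact isCompact_Icc

/-- Scheme b conserves kinetic plus electric energy. -/
lemma aux_stepB {L τ : ℝ} (hτ : τ ≠ 0) {f g : V3 → V3 → ℝ} {E E' : V3 → V3}
    (hf : IsPhase L f) (hg : IsPhase L g) (hE : IsSpatialVF L E) (hE' : IsSpatialVF L E')
    (h : ∀ x v, (g x v - f x v) / τ
      + ((2:ℝ)⁻¹ • (E x + E' x)) ⬝ᵥ gradV (fun y w => (f y w + g y w) / 2) x v = 0)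
    (hJ : ∀ x, τ⁻¹ • (E' x - E x) = - ((2:ℝ)⁻¹ • (Jcur f x + Jcur g x))) :
    kinE L g + fieldE L E' = kinE L f + fieldE L E := by
  unfold kinE fieldE
  rw [← integral_add hg.int_prod.integral_prod_left (aux_int_sq hE'),
    ← integral_add hf.int_prod.integral_prod_left (aux_int_sq hE)]
  congr 1
  funext x
  have k := aux_kin hτ hf hg x (fun _ => (2:ℝ)⁻¹ • (E x + E' x)) (fun i => contDiff_const)
    (by intro i v; simp) (h x)
  have e : ∫ v, (f x v + g x v) * (((2:ℝ)⁻¹ • (E x + E' x)) ⬝ᵥ v)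
      = ∑ i, (2:ℝ)⁻¹ * (E x i + E' x i) * (Jcur f x i + Jcur g x i) := by
    have e1 : ∀ v, (f x v + g x v) * (((2:ℝ)⁻¹ • (E x + E' x)) ⬝ᵥ v)
        = ∑ i, (2:ℝ)⁻¹ * (E x i + E' x i) * (f x v * v i + g x v * v i) := by
      intro v
      rw [dotProduct, Finset.mul_sum]
      refine Finset.sum_congr rfl fun i _ => ?_
      simp only [Pi.smul_apply, Pi.add_apply, smul_eq_mul]
      ring
    have if_ := fun i => hf.int_mul x (fun v => v i) (continuous_apply i)
    have ig := fun i => hg.int_mul x (fun v => v i) (continuous_apply i)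
    simp only [e1]
    rw [integral_finsetSum _ fun i _ => ((if_ i).fun_add (ig i)).const_mul _]
    refine Finset.sum_congr rfl fun i _ => ?_
    rw [integral_const_mul, integral_add (if_ i) (ig i), aux_Jcur hf, aux_Jcur hg]
  rw [e] at k
  have hJi : ∀ i, E' x i - E x i = -(τ * 2⁻¹ * (Jcur f x i + Jcur g x i)) := by
    intro i
    have := congrFun (hJ x) i
    simp only [Pi.smul_apply, Pi.sub_apply, Pi.neg_apply, Pi.add_apply, smul_eq_mul] at this
    field_simp at this ⊢
    linarith
  simp only [dotProduct, Fin.sum_univ_three] at k ⊢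
  linear_combination k + (E x 0 + E' x 0) * hJi 0 + (E x 1 + E' x 1) * hJi 1
    + (E x 2 + E' x 2) * hJi 2

lemma IsSpatialVF.avg {L : ℝ} {E E' : V3 → V3} (hE : IsSpatialVF L E) (hE' : IsSpatialVF L E') :
    IsSpatialVF L (fun y => (2:ℝ)⁻¹ • (E y + E' y)) :=
  ⟨(hE.1.add hE'.1).const_smul _, fun x i => by simp only [hE.2, hE'.2]⟩

lemma IsSpatialVF.comp {L : ℝ} {E : V3 → V3} (hE : IsSpatialVF L E) (i : Fin 3) :
    ContDiff ℝ 1 (fun x => E x i) :=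
  (contDiff_apply ℝ ℝ i).comp (hE.1.of_le (m := 1) (by simp))

lemma aux_pd_cross {L : ℝ} {P Q : V3 → V3} (hP : IsSpatialVF L P) (hQ : IsSpatialVF L Q)
    (i j k : Fin 3) (x : V3) :
    pd i (fun y => P y j * Q y k - P y k * Q y j) x =
      P x j * pd i (fun y => Q y k) x + Q x k * pd i (fun y => P y j) x
      - (P x k * pd i (fun y => Q y j) x + Q x j * pd i (fun y => P y k) x) := by
  have dP := fun j => (hP.comp j).differentiable (by simp) x
  have dQ := fun j => (hQ.comp j).differentiable (by simp) x
  unfold pd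
  rw [fderiv_fun_sub ((dP j).fun_mul (dQ k)) ((dP k).fun_mul (dQ j)), fderiv_fun_mul (dP j) (dQ k),
    fderiv_fun_mul (dP k) (dQ j)]
  simp

lemma aux_int_cross {L : ℝ} (hL : 0 < L) {P Q : V3 → V3} (hP : IsSpatialVF L P)
    (hQ : IsSpatialVF L Q) (i j k : Fin 3) :
    IntegrableOn (pd i (fun y => P y j * Q y k - P y k * Q y j)) (box L) ∧
    ∫ x in box L, pd i (fun y => P y j * Q y k - P y k * Q y j) x = 0 := by
  have c : ContDiff ℝ 1 (fun y => P y j * Q y k - P y k * Q y j) :=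
    ((hP.comp j).mul (hQ.comp k)).sub ((hP.comp k).mul (hQ.comp j))
  have c' : Continuous (pd i (fun y => P y j * Q y k - P y k * Q y j)) :=
    (c.continuous_fderiv (by simp)).clm_apply continuous_const
  exact ⟨c'.continuousOn.integrableOn_compact isCompact_Icc,
    aux_box_integral_pd hL i _ c (fun x => by simp only [hP.2, hQ.2])⟩

/-- `∫ (curl P · Q - P · curl Q) = 0`. -/
lemma aux_curl {L : ℝ} (hL : 0 < L) {P Q : V3 → V3} (hP : IsSpatialVF L P)
    (hQ : IsSpatialVF L Q) :
    ∫ x in box L, (curl P x ⬝ᵥ Q x - curl Q x ⬝ᵥ P x) = 0 := by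
  have e : ∀ x, curl P x ⬝ᵥ Q x - curl Q x ⬝ᵥ P x =
      pd 0 (fun y => P y 1 * Q y 2 - P y 2 * Q y 1) x
      + pd 1 (fun y => P y 2 * Q y 0 - P y 0 * Q y 2) x
      + pd 2 (fun y => P y 0 * Q y 1 - P y 1 * Q y 0) x := by
    intro x
    simp only [aux_pd_cross hP hQ]
    simp only [dotProduct, Fin.sum_univ_three, curl, Matrix.cons_val]
    ring
  simp only [e]
  have h0 := aux_int_cross hL hP hQ 0 1 2
  have h1 := aux_int_cross hL hP hQ 1 2 0
  have h2 := aux_int_cross hL hP hQ 2 0 1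
  rw [integral_add (Integrable.fun_add h0.1 h1.1) h2.1, integral_add h0.1 h1.1, h0.2, h1.2, h2.2]
  simp

/-- Scheme c conserves the field energy. -/
lemma aux_stepC_field {L τ : ℝ} (hL : 0 < L) (hτ : τ ≠ 0) {E E' B B' : V3 → V3}
    (hE : IsSpatialVF L E) (hE' : IsSpatialVF L E')
    (hB : IsSpatialVF L B) (hB' : IsSpatialVF L B')
    (h1 : ∀ x, τ⁻¹ • (B' x - B x) = - curl (fun y => (2:ℝ)⁻¹ • (E y + E' y)) x)
    (h2 : ∀ x, τ⁻¹ • (E' x - E x) = curl (fun y => (2:ℝ)⁻¹ • (B y + B' y)) x) :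
    fieldE L E' + fieldE L B' = fieldE L E + fieldE L B := by
  have key := aux_curl hL (hE.avg hE') (hB.avg hB')
  unfold fieldE
  rw [← integral_add (aux_int_sq hE') (aux_int_sq hB'),
    ← integral_add (aux_int_sq hE) (aux_int_sq hB), ← sub_eq_zero,
    ← integral_sub (Integrable.fun_add (aux_int_sq hE') (aux_int_sq hB'))
      (Integrable.fun_add (aux_int_sq hE) (aux_int_sq hB))]
  rw [← mul_zero (-2 * τ), ← key, ← integral_const_mul]
  congr 1
  funext x
  have c1 : ∀ i, curl (fun y => (2:ℝ)⁻¹ • (E y + E' y)) x i = -(τ⁻¹ * (B' x i - B x i)) := by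
    intro i
    have := congrFun (h1 x) i
    simp only [Pi.smul_apply, Pi.sub_apply, Pi.neg_apply, smul_eq_mul] at this
    linarith
  have c2 : ∀ i, curl (fun y => (2:ℝ)⁻¹ • (B y + B' y)) x i = τ⁻¹ * (E' x i - E x i) := by
    intro i
    have := congrFun (h2 x) i
    simp only [Pi.smul_apply, Pi.sub_apply, smul_eq_mul] at this
    linarith
  simp only [dotProduct, Fin.sum_univ_three, c1, c2, Pi.smul_apply, Pi.add_apply, smul_eq_mul]
  field_simp
  ring

/-- Scheme c conserves the kinetic energy. -/
lemma aux_stepC_kin {L τ : ℝ} (hτ : τ ≠ 0) {f g : V3 → V3 → ℝ} {B B' : V3 → V3}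
    (hf : IsPhase L f) (hg : IsPhase L g)
    (h : ∀ x v, (g x v - f x v) / τ + ((2:ℝ)⁻¹ • crossProduct v (B x + B' x))
      ⬝ᵥ gradV (fun y w => (f y w + g y w) / 2) x v = 0) :
    kinE L g = kinE L f := by
  unfold kinE
  congr 1
  funext x
  have hpr : ∀ (j : Fin 3) (v : V3), HasFDerivAt (fun w : V3 => w j)
    (ContinuousLinearMap.proj (R := ℝ) j) v := fun j v => hasFDerivAt_apply j v
  have hform : ∀ i j k : Fin 3, ∀ a b : ℝ, ∀ v : V3, i ≠ j → i ≠ k →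
      fderiv ℝ (fun w : V3 => (2:ℝ)⁻¹ * (w j * a - w k * b)) v (Pi.single i 1) = 0 := by
    intro i j k a b v hj hk
    have := (((hpr j v).mul_const a).sub ((hpr k v).mul_const b)).const_mul (2:ℝ)⁻¹
    rw [HasFDerivAt.fderiv (f := fun w : V3 => (2:ℝ)⁻¹ * (w j * a - w k * b)) this]
    simp [Pi.single_apply, hj.symm, hk.symm]
  have k := aux_kin hτ hf hg x (fun v => (2:ℝ)⁻¹ • crossProduct v (B x + B' x)) ?_ ?_ (h x)
  · have z : ∀ v, ((2:ℝ)⁻¹ • crossProduct v (B x + B' x)) ⬝ᵥ v = 0 := by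
      intro v
      simp only [cross_apply, dotProduct, Fin.sum_univ_three, Pi.smul_apply, smul_eq_mul,
        Matrix.cons_val]
      ring
    simp only [z, mul_zero, integral_zero] at k
    linarith
  · intro i
    fin_cases i <;> simp [cross_apply] <;> fun_prop
  · intro i v
    fin_cases i
    · simpa [cross_apply] using hform 0 1 2 _ _ v (by decide) (by decide)
    · simpa [cross_apply] using hform 1 2 0 _ _ v (by decide) (by decide)
    · simpa [cross_apply] using hform 2 0 1 _ _ v (by decide) (by decide)

/-- Energy conservation of the Strang-split Scheme-5 (Theorem 2.2). -/
theorem scheme5_energy_conservation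
    (L Δt : ℝ) (hL : 0 < L) (hΔt : 0 < Δt)
    (f0 f1 f2 f3 f4 f5 : V3 → V3 → ℝ)
    (E0 E1 E2 E3 E4 E5 B0 B1 B2 B3 B4 B5 : V3 → V3)
    (hf0 : IsPhase L f0) (hf1 : IsPhase L f1) (hf2 : IsPhase L f2)
    (hf3 : IsPhase L f3) (hf4 : IsPhase L f4) (hf5 : IsPhase L f5)
    (hE0 : IsSpatialVF L E0) (hE1 : IsSpatialVF L E1) (hE2 : IsSpatialVF L E2)
    (hE3 : IsSpatialVF L E3) (hE4 : IsSpatialVF L E4) (hE5 : IsSpatialVF L E5)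
    (hB0 : IsSpatialVF L B0) (hB1 : IsSpatialVF L B1) (hB2 : IsSpatialVF L B2)
    (hB3 : IsSpatialVF L B3) (hB4 : IsSpatialVF L B4) (hB5 : IsSpatialVF L B5)
    -- Step 1: Scheme-a with step Δt/2
    (hstep1f : ∀ x v : V3,
      (f1 x v - f0 x v) / (Δt / 2)
        + v ⬝ᵥ gradX (fun y w => (f0 y w + f1 y w) / 2) x v = 0)
    (hstep1E : ∀ x : V3, E1 x = E0 x) (hstep1B : ∀ x : V3, B1 x = B0 x)
    -- Step 2: Scheme-b with step Δt/2
    (hstep2f : ∀ x v : V3,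
      (f2 x v - f1 x v) / (Δt / 2)
        + ((2:ℝ)⁻¹ • (E1 x + E2 x))
            ⬝ᵥ gradV (fun y w => (f1 y w + f2 y w) / 2) x v = 0)
    (hstep2E : ∀ x : V3,
      (Δt / 2)⁻¹ • (E2 x - E1 x) = - ((2:ℝ)⁻¹ • (Jcur f1 x + Jcur f2 x)))
    (hstep2B : ∀ x : V3, B2 x = B1 x)
    -- Step 3: Scheme-c with step Δt
    (hstep3B : ∀ x : V3,
      Δt⁻¹ • (B3 x - B2 x) = - curl (fun y => (2:ℝ)⁻¹ • (E2 y + E3 y)) x)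
    (hstep3E : ∀ x : V3,
      Δt⁻¹ • (E3 x - E2 x) = curl (fun y => (2:ℝ)⁻¹ • (B2 y + B3 y)) x)
    (hstep3f : ∀ x v : V3,
      (f3 x v - f2 x v) / Δt
        + ((2:ℝ)⁻¹ • crossProduct v (B2 x + B3 x))
            ⬝ᵥ gradV (fun y w => (f2 y w + f3 y w) / 2) x v = 0)
    -- Step 4: Scheme-b with step Δt/2
    (hstep4f : ∀ x v : V3,
      (f4 x v - f3 x v) / (Δt / 2)
        + ((2:ℝ)⁻¹ • (E3 x + E4 x))
            ⬝ᵥ gradV (fun y w => (f3 y w + f4 y w) / 2) x v = 0)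
    (hstep4E : ∀ x : V3,
      (Δt / 2)⁻¹ • (E4 x - E3 x) = - ((2:ℝ)⁻¹ • (Jcur f3 x + Jcur f4 x)))
    (hstep4B : ∀ x : V3, B4 x = B3 x)
    -- Step 5: Scheme-a with step Δt/2
    (hstep5f : ∀ x v : V3,
      (f5 x v - f4 x v) / (Δt / 2)
        + v ⬝ᵥ gradX (fun y w => (f4 y w + f5 y w) / 2) x v = 0)
    (hstep5E : ∀ x : V3, E5 x = E4 x) (hstep5B : ∀ x : V3, B5 x = B4 x) :
    kinE L f5 + (fieldE L E5 + fieldE L B5)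
      = kinE L f0 + (fieldE L E0 + fieldE L B0) := by
  have h2 : Δt / 2 ≠ 0 := by positivity
  have a1 := aux_stepA hL h2 hf0 hf1 hstep1f
  have a2 := aux_stepB h2 hf1 hf2 hE1 hE2 hstep2f hstep2E
  have a3 := aux_stepC_kin hΔt.ne' hf2 hf3 hstep3f
  have a3' := aux_stepC_field hL hΔt.ne' hE2 hE3 hB2 hB3 hstep3B hstep3E
  have a4 := aux_stepB h2 hf3 hf4 hE3 hE4 hstep4f hstep4E
  have a5 := aux_stepA hL h2 hf4 hf5 hstep5f
  rw [← funext hstep1E, ← funext hstep1B, ← funext hstep2B, funext hstep5E, funext hstep5B,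
    funext hstep4B]
  linarith
end
end
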